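/- In any execution of algorithm ProactiveGreedy on an arrival sequence with maximum burst size b, for every frame f and every ℓ ∈ {1,...,k}, the total number of frames mapped (directly or indirectly) by the mapping φ to f via the ℓ-th packet p_ℓ ∈ f is at most b·(1+b)^{ℓ−1}. -/

import Mathlib

/-! ## Model: d-uniform bounded-delay goodput ({\sc d-uBDG}) instances -/

/-- An arrival sequence for the `d`-uniform bounded-delay goodput problem:
`n` frames, each consisting of `k` unit-size packets; packet `(f, ℓ)` (the `ℓ`-th
packet of frame `f`, `0`-indexed) arrives at time `a f ℓ`, arrival times are
nondecreasing within each frame, and every packet has deadline `a f ℓ + d`. -/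
structure ArrivalSeq (n k d : ℕ) where
  a : Fin n → Fin k → ℕ
  mono : ∀ f : Fin n, Monotone (a f)

namespace ArrivalSeq

variable {n k d : ℕ}

/-- At most `b` packets arrive in any single time slot (maximum burst size `b`). -/
def BurstBound (A : ArrivalSeq n k d) (b : ℕ) : Prop :=
  ∀ t : ℕ, Set.ncard {p : Fin n × Fin k | A.a p.1 p.2 = t} ≤ b

/-- A feasible schedule: at most one packet is delivered per time slot, every packet is
delivered at most once, and every delivered packet is delivered between its arrival
time and its deadline. -/
def IsSchedule (A : ArrivalSeq n k d) (S : ℕ → Option (Fin n × Fin k)) : Prop :=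
  (∀ (p : Fin n × Fin k) (t t' : ℕ), S t = some p → S t' = some p → t = t') ∧
  ∀ (p : Fin n × Fin k) (t : ℕ), S t = some p →
    A.a p.1 p.2 ≤ t ∧ t ≤ A.a p.1 p.2 + d

/-- A frame is successful under schedule `S` if all of its packets are delivered. -/
def Successful (A : ArrivalSeq n k d) (S : ℕ → Option (Fin n × Fin k)) (f : Fin n) : Prop :=
  ∀ ℓ : Fin k, ∃ t : ℕ, S t = some (f, ℓ)

/-- The goodput of a schedule: the number of successful frames. -/
noncomputable def Goodput (A : ArrivalSeq n k d) (S : ℕ → Option (Fin n × Fin k)) : ℕ :=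
  Set.ncard {f : Fin n | A.Successful S f}

/-- `S` is an optimal (feasible) schedule for `A`. -/
def IsOptimal (A : ArrivalSeq n k d) (S : ℕ → Option (Fin n × Fin k)) : Prop :=
  A.IsSchedule S ∧
    ∀ S' : ℕ → Option (Fin n × Fin k), A.IsSchedule S' → A.Goodput S' ≤ A.Goodput S

end ArrivalSeq

/-! ## Executions of scheduling algorithms -/

/-- A trace of the execution of a scheduling algorithm on the arrival sequence `A`:
`deliver t` is the packet delivered at the scheduling substep of slot `t` (if any), and
`dropTime p` is the slot at which packet `p` is dropped by the algorithm (if ever). -/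
structure AlgExec {n k d : ℕ} (A : ArrivalSeq n k d) where
  deliver : ℕ → Option (Fin n × Fin k)
  dropTime : Fin n × Fin k → Option ℕ

namespace AlgExec

variable {n k d : ℕ} {A : ArrivalSeq n k d}

/-- packet `p` is delivered at some time `≤ t`. -/
def DeliveredBy (E : AlgExec A) (p : Fin n × Fin k) (t : ℕ) : Prop :=
  ∃ s ≤ t, E.deliver s = some p

/-- packet `p` is delivered at some point of the execution. -/
def Delivered (E : AlgExec A) (p : Fin n × Fin k) : Prop :=
  ∃ s : ℕ, E.deliver s = some p

/-- packet `p` is dropped at some time `< t`. -/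
def DroppedBefore (E : AlgExec A) (p : Fin n × Fin k) (t : ℕ) : Prop :=
  ∃ s < t, E.dropTime p = some s

/-- packet `p` is pending at (the scheduling substep of) slot `t`: it has arrived, its
deadline has not passed, and it has been neither delivered nor dropped before `t`. -/
def Pending (E : AlgExec A) (p : Fin n × Fin k) (t : ℕ) : Prop :=
  A.a p.1 p.2 ≤ t ∧ t ≤ A.a p.1 p.2 + d ∧
    ¬ (∃ s < t, E.deliver s = some p) ∧ ¬ E.DroppedBefore p t

/-- frame `f` is alive at time `t`: none of its packets has been dropped before `t`,
nor has expired (i.e., reached its deadline undelivered) before `t`. -/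
def Alive (E : AlgExec A) (f : Fin n) (t : ℕ) : Prop :=
  ∀ ℓ : Fin k, ¬ E.DroppedBefore (f, ℓ) t ∧
    (A.a f ℓ + d < t → E.DeliveredBy (f, ℓ) (A.a f ℓ + d))

/-- frame `f` has some pending packet at time `t`. -/
def HasPending (E : AlgExec A) (f : Fin n) (t : ℕ) : Prop :=
  ∃ ℓ : Fin k, E.Pending (f, ℓ) t

/-- `I_t(f)`: the index of the first (minimal-index) pending packet of `f` at time `t`. -/
noncomputable def Iidx (E : AlgExec A) (t : ℕ) (f : Fin n) : ℕ :=
  sInf {ℓ : ℕ | ∃ h : ℓ < k, E.Pending (f, ⟨ℓ, h⟩) t}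

/-- frame `f` is completed by the execution: all of its packets are delivered. -/
def Completed (E : AlgExec A) (f : Fin n) : Prop :=
  ∀ ℓ : Fin k, E.Delivered (f, ℓ)

/-- `w f`: the number of packets of frame `f` delivered by the execution. -/
noncomputable def w (E : AlgExec A) (f : Fin n) : ℕ :=
  Set.ncard {ℓ : Fin k | E.Delivered (f, ℓ)}

/-- the first time at which some packet of `f` is dropped. -/
noncomputable def dropT (E : AlgExec A) (f : Fin n) : ℕ :=
  sInf {t : ℕ | ∃ ℓ : Fin k, E.dropTime (f, ℓ) = some t}

/-- the index of the first packet of `f` to be dropped (the minimal index among the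
packets of `f` dropped at the first drop time of `f`). -/
noncomputable def firstDropIdx (E : AlgExec A) (f : Fin n) : ℕ :=
  sInf {ℓ : ℕ | ∃ h : ℓ < k, E.dropTime (f, ⟨ℓ, h⟩) = some (E.dropT f)}

/-! ### The algorithm `ProactiveGreedy` -/

/-- The defining conditions of an execution of `ProactiveGreedy` (with arbitrary
tie-breaking): at every slot `t`,
(i) a delivered packet is the first pending packet of an alive frame maximizing
`I_t` among all alive frames with pending packets;
(ii) a packet is delivered whenever some alive frame has a pending packet; and
(iii) a packet is dropped at `t` exactly when it is pending at `t` and either its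
frame is not alive at `t` (line 1 of the algorithm) or the packet delivered at `t`
belongs to a different frame (line 4: packets of all non-chosen frames are dropped). -/
def PGValid (E : AlgExec A) : Prop :=
  (∀ (t : ℕ) (f : Fin n) (ℓ : Fin k), E.deliver t = some (f, ℓ) →
      E.Alive f t ∧ E.Pending (f, ℓ) t ∧ (ℓ : ℕ) = E.Iidx t f ∧
      ∀ f' : Fin n, E.Alive f' t → E.HasPending f' t → E.Iidx t f' ≤ E.Iidx t f) ∧
  (∀ t : ℕ, (∃ f : Fin n, E.Alive f t ∧ E.HasPending f t) → E.deliver t ≠ none) ∧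
  (∀ (p : Fin n × Fin k) (t : ℕ), E.dropTime p = some t ↔
      E.Pending p t ∧
        (¬ E.Alive p.1 t ∨ ∃ q : Fin n × Fin k, E.deliver t = some q ∧ q.1 ≠ p.1))

/-! ### The mapping `φ` used in the analysis of `ProactiveGreedy` -/

open Classical in
/-- The frame onto which a frame `f ∉ F_PG` is *directly* mapped by the mapping `φ`:
the frame whose packet is delivered at the time `t_f` at which the first packet of `f`
is dropped.  Frames of `F_PG` are mapped to themselves. -/
noncomputable def phiNext (E : AlgExec A) (f : Fin n) : Fin n :=
  if E.Completed f then f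
  else
    match E.deliver (E.dropT f) with
    | some q => q.1
    | none => f

/-- the frame onto which `f` is mapped after `j` successive (re-)mappings of `φ`. -/
noncomputable def phiChain (E : AlgExec A) (f : Fin n) (j : ℕ) : Fin n :=
  (E.phiNext)^[j] f

/-- frame `f` is *directly* mapped by `φ` via the packet `q` (of the frame `q.1`):
`q` is the packet delivered at the time the first packet of `f` is dropped. -/
def PhiDirectVia (E : AlgExec A) (f : Fin n) (q : Fin n × Fin k) : Prop :=
  ¬ E.Completed f ∧ E.deliver (E.dropT f) = some q

/-- frame `f` is mapped (directly or indirectly, i.e. after re-mappings) by `φ`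
via the packet `q`; `M(q)` is the set of frames mapped via `q`. -/
def PhiMappedVia (E : AlgExec A) (f : Fin n) (q : Fin n × Fin k) : Prop :=
  ∃ j : ℕ, E.PhiDirectVia (E.phiChain f j) q

/-! ### The algorithm `Greedy` -/

/-- packet `p` is still pending after the scheduling substep of slot `t`. -/
def PendingAfter (E : AlgExec A) (p : Fin n × Fin k) (t : ℕ) : Prop :=
  E.Pending p t ∧ E.deliver t ≠ some p

/-- frame `f` is infeasible after the scheduling substep of slot `t`: for some pending
packet `(f, ℓ)` the pending packets of `f` of index `≤ ℓ` cannot all be scheduled in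
the slots `t+1, …, a f ℓ + d`. -/
noncomputable def Infeasible (E : AlgExec A) (f : Fin n) (t : ℕ) : Prop :=
  ∃ ℓ : Fin k, E.PendingAfter (f, ℓ) t ∧
    A.a f ℓ + d < t + Set.ncard {j : Fin k | j ≤ ℓ ∧ E.PendingAfter (f, j) t}

/-- The defining conditions of an execution of `Greedy` (with arbitrary tie-breaking):
at every slot `t`,
(i) a delivered packet is the first pending packet of an alive frame maximizing `I_t`
among all alive frames with pending packets;
(ii) a packet is delivered whenever some alive frame has a pending packet; and
(iii) a packet is dropped at `t` exactly when it is pending at `t`, it is not the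
packet delivered at `t`, and either its frame is not alive at `t`, or its residual
slack at `t` is `0` (it expires), or its frame becomes infeasible at `t` (cleanup). -/
noncomputable def GreedyValid (E : AlgExec A) : Prop :=
  (∀ (t : ℕ) (f : Fin n) (ℓ : Fin k), E.deliver t = some (f, ℓ) →
      E.Alive f t ∧ E.Pending (f, ℓ) t ∧ (ℓ : ℕ) = E.Iidx t f ∧
      ∀ f' : Fin n, E.Alive f' t → E.HasPending f' t → E.Iidx t f' ≤ E.Iidx t f) ∧
  (∀ t : ℕ, (∃ f : Fin n, E.Alive f t ∧ E.HasPending f t) → E.deliver t ≠ none) ∧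
  (∀ (p : Fin n × Fin k) (t : ℕ), E.dropTime p = some t ↔
      E.Pending p t ∧ E.deliver t ≠ some p ∧
        (¬ E.Alive p.1 t ∨ A.a p.1 p.2 + d = t ∨ E.Infeasible p.1 t))

/-- packet `p = (f, ℓ)` is *eligible* at time `t`: it is in the buffer (pending) at
`t`, its frame is alive at `t`, and `ℓ = I_t(f)`. -/
def Eligible (E : AlgExec A) (p : Fin n × Fin k) (t : ℕ) : Prop :=
  E.Alive p.1 t ∧ E.Pending p t ∧ (p.2 : ℕ) = E.Iidx t p.1

/-! ### The mapping `ψ` used in the analysis of `Greedy` -/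

/-- The mapping `ψ` used in the analysis of `Greedy`, relative to the set `O` of frames
of a fixed optimal schedule and the maximum burst size `b`.  Every frame of
`F_G` (completed by `Greedy`) is mapped to itself (encoded as `dm f = none`); every
frame `f ∉ F_G` is directly mapped via a packet `q` delivered by `Greedy` no later than
the drop time `t_f` of `f`, whose index is at least the index of the first dropped
packet of `f`; every delivered packet has at most `2` frames of `O` and at most `b`
frames in total directly mapped to it. -/
structure PsiMapping (E : AlgExec A) (O : Set (Fin n)) (b : ℕ) where
  dm : Fin n → Option (Fin n × Fin k)
  mapsSelf : ∀ f : Fin n, E.Completed f → dm f = none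
  mapsAll : ∀ f : Fin n, ¬ E.Completed f → ∃ q : Fin n × Fin k, dm f = some q
  viaValid : ∀ (f : Fin n) (q : Fin n × Fin k), dm f = some q →
    E.firstDropIdx f ≤ (q.2 : ℕ) ∧ ∃ t ≤ E.dropT f, E.deliver t = some q
  capO : ∀ q : Fin n × Fin k, Set.ncard {f : Fin n | f ∈ O ∧ dm f = some q} ≤ 2
  capAll : ∀ q : Fin n × Fin k, Set.ncard {f : Fin n | dm f = some q} ≤ b

namespace PsiMapping

variable {E : AlgExec A} {O : Set (Fin n)} {b : ℕ}

/-- the frame onto which `f` is directly mapped by `ψ` (itself, if `f ∈ F_G`). -/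
def next (M : PsiMapping E O b) (f : Fin n) : Fin n :=
  match M.dm f with
  | some q => q.1
  | none => f

/-- the frame onto which `f` is mapped after `j` successive (re-)mappings of `ψ`. -/
def chain (M : PsiMapping E O b) (f : Fin n) (j : ℕ) : Fin n :=
  (M.next)^[j] f

/-- frame `f` is mapped (directly or indirectly) by `ψ` via the packet `q`;
`M(q)` is the set of frames mapped via `q`. -/
def MappedVia (M : PsiMapping E O b) (f : Fin n) (q : Fin n × Fin k) : Prop :=
  ∃ j : ℕ, M.dm (M.chain f j) = some q

end PsiMapping

end AlgExec

/-!
Every frame pending at a slot `t` either has a packet arriving at `t` or is the one frame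
served at `t - 1`, since all other frames were dropped then; so at most `b + 1` frames are
pending, and as one of them is served, at most `b` are directly mapped via any packet. If
`g` is directly mapped via `q`, then `q` won against the first pending packet of `g`, whose
index exceeds that of every packet of `g` delivered before. Hence a frame mapped via `q` is
either directly mapped via `q` or mapped via a packet, of index `ℓ < q.2`, of some `g`
directly mapped via `q`. The loads therefore satisfy
`|M(q)| ≤ b · (1 + ∑ ℓ < i, b (1 + b) ^ ℓ) = b (1 + b) ^ i` with `i = q.2`.
-/

theorem one_add_sum_Iio_mul_one_add_pow {R : Type*} [CommSemiring R] {k : ℕ} (b : R)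
    (i : Fin k) :
    1 + ∑ ℓ ∈ Finset.Iio i, b * (1 + b) ^ (ℓ : ℕ) = (1 + b) ^ (i : ℕ) := by
  have to_range : ∑ ℓ ∈ Finset.Iio i, (b + 1) ^ (ℓ : ℕ) =
      ∑ m ∈ Finset.range i, (b + 1) ^ m := by
    rw [← Nat.Iio_eq_range, ← Fin.map_valEmbedding_Iio, Finset.sum_map]
    rfl
  rw [← Finset.mul_sum, add_comm 1 b, to_range, ← geom_sum_mul_add b i, mul_comm, add_comm]

theorem ncard_le_mul_one_add_pow_of_branching {α : Type*} [Finite α] {k b : ℕ}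
    {D M : α × Fin k → Set α} (hD : ∀ q, (D q).ncard ≤ b)
    (hM : ∀ q, ∀ f ∈ M q, f ∈ D q ∨ ∃ g ∈ D q, ∃ ℓ < q.2, f ∈ M (g, ℓ)) (q : α × Fin k) :
    (M q).ncard ≤ b * (1 + b) ^ (q.2 : ℕ) := by
  obtain ⟨f₀, i⟩ := q
  induction i using WellFoundedLT.induction generalizing f₀ with
  | ind i ih =>
    let T : Finset α := (D (f₀, i)).toFinite.toFinset
    let B (g : α) : Set α := insert g (⋃ ℓ ∈ Finset.Iio i, M (g, ℓ))
    have cover : M (f₀, i) ⊆ ⋃ g ∈ T, B g := by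
      intro f hf
      simp only [T, B, Set.mem_iUnion, Set.Finite.mem_toFinset, Set.mem_insert_iff,
        Finset.mem_Iio]
      rcases hM _ f hf with hf | ⟨g, hg, ℓ, hℓ, hf⟩
      · exact ⟨f, hf, .inl rfl⟩
      · exact ⟨g, hg, .inr ⟨ℓ, hℓ, hf⟩⟩
    have branch_le (g : α) : (B g).ncard ≤ (1 + b) ^ (i : ℕ) := calc
      (B g).ncard ≤ (⋃ ℓ ∈ Finset.Iio i, M (g, ℓ)).ncard + 1 := Set.ncard_insert_le _ _
      _ ≤ ∑ ℓ ∈ Finset.Iio i, (M (g, ℓ)).ncard + 1 := by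
        gcongr
        exact Finset.set_ncard_biUnion_le _ _
      _ ≤ ∑ ℓ ∈ Finset.Iio i, b * (1 + b) ^ (ℓ : ℕ) + 1 := by
        gcongr with ℓ hℓ
        exact ih ℓ (Finset.mem_Iio.mp hℓ) g
      _ = (1 + b) ^ (i : ℕ) := by rw [add_comm, one_add_sum_Iio_mul_one_add_pow]
    calc (M (f₀, i)).ncard ≤ (⋃ g ∈ T, B g).ncard := Set.ncard_le_ncard cover (Set.toFinite _)
      _ ≤ ∑ g ∈ T, (B g).ncard := Finset.set_ncard_biUnion_le _ _
      _ ≤ T.card * (1 + b) ^ (i : ℕ) := Finset.sum_le_card_nsmul _ _ _ fun g _ => branch_le g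
      _ ≤ b * (1 + b) ^ (i : ℕ) := by
        gcongr
        rw [← Set.ncard_eq_toFinset_card]
        exact hD (f₀, i)

namespace AlgExec

variable {n k d b : ℕ} {A : ArrivalSeq n k d} {E : AlgExec A} {f g : Fin n} {ℓ : Fin k}
  {p q : Fin n × Fin k} {s t : ℕ}

theorem DroppedBefore.mono (h : E.DroppedBefore p s) (hst : s ≤ t) : E.DroppedBefore p t :=
  let ⟨r, hr, hdrop⟩ := h
  ⟨r, hr.trans_le hst, hdrop⟩

theorem Pending.anti (h : E.Pending p t) (harr : A.a p.1 p.2 ≤ s) (hst : s ≤ t) :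
    E.Pending p s :=
  let ⟨_, hexp, hdel, hdrop⟩ := h
  ⟨harr, hst.trans hexp, fun ⟨r, hr, hp⟩ => hdel ⟨r, hr.trans_le hst, hp⟩,
    fun hs => hdrop (hs.mono hst)⟩

theorem Pending.Iidx_le (h : E.Pending (f, ℓ) t) : E.Iidx t f ≤ ℓ :=
  Nat.sInf_le ⟨ℓ.isLt, h⟩

theorem HasPending.exists_pending_Iidx (h : E.HasPending f t) :
    ∃ ℓ : Fin k, ℓ = E.Iidx t f ∧ E.Pending (f, ℓ) t := by
  obtain ⟨ℓ, hℓ⟩ := h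
  obtain ⟨hlt, hpend⟩ := Nat.sInf_mem
    (s := {m : ℕ | ∃ h : m < k, E.Pending (f, ⟨m, h⟩) t}) ⟨ℓ, ℓ.isLt, hℓ⟩
  exact ⟨⟨E.Iidx t f, hlt⟩, rfl, hpend⟩

theorem dropT_le (h : E.dropTime (f, ℓ) = some t) : E.dropT f ≤ t :=
  Nat.sInf_le ⟨ℓ, h⟩

theorem exists_dropTime_eq_dropT (h : E.dropTime (f, ℓ) = some t) :
    ∃ m : Fin k, E.dropTime (f, m) = some (E.dropT f) :=
  Nat.sInf_mem (s := {t : ℕ | ∃ ℓ : Fin k, E.dropTime (f, ℓ) = some t}) ⟨t, ℓ, h⟩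

theorem phiNext_eq_self_or_phiDirectVia (E : AlgExec A) (f : Fin n) :
    E.phiNext f = f ∨ ∃ ℓ : Fin k, E.PhiDirectVia f (E.phiNext f, ℓ) := by
  by_cases hf : E.Completed f
  · exact .inl (if_pos hf)
  · cases hq : E.deliver (E.dropT f) with
    | none => exact .inl (by simp only [phiNext, if_neg hf, hq])
    | some q => exact .inr ⟨q.2, hf, by simp only [phiNext, if_neg hf, hq]⟩

theorem PhiMappedVia.direct_or_exists (h : E.PhiMappedVia f q) :
    E.PhiDirectVia f q ∨
      ∃ g, ∃ ℓ : Fin k, E.PhiMappedVia f (g, ℓ) ∧ E.PhiDirectVia g q := by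
  obtain ⟨j, hj⟩ := h
  induction j with
  | zero => exact .inl hj
  | succ j ih =>
    rw [phiChain, Function.iterate_succ_apply'] at hj
    rcases E.phiNext_eq_self_or_phiDirectVia (E.phiChain f j) with hself | ⟨ℓ, hℓ⟩
    · exact ih (hself ▸ hj)
    · exact .inr ⟨_, ℓ, ⟨j, hℓ⟩, hj⟩

namespace PGValid

theorem alive_of_deliver (hE : E.PGValid) (h : E.deliver t = some q) : E.Alive q.1 t :=
  (hE.1 t q.1 q.2 h).1

theorem pending_of_deliver (hE : E.PGValid) (h : E.deliver t = some q) : E.Pending q t :=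
  (hE.1 t q.1 q.2 h).2.1

theorem Iidx_eq_of_deliver (hE : E.PGValid) (h : E.deliver t = some q) :
    E.Iidx t q.1 = q.2 :=
  (hE.1 t q.1 q.2 h).2.2.1.symm

theorem Iidx_le_of_deliver (hE : E.PGValid) (h : E.deliver t = some q)
    (hal : E.Alive f t) (hp : E.HasPending f t) : E.Iidx t f ≤ q.2 :=
  ((hE.1 t q.1 q.2 h).2.2.2 f hal hp).trans_eq (hE.Iidx_eq_of_deliver h)

theorem pending_of_dropTime (hE : E.PGValid) (h : E.dropTime p = some t) : E.Pending p t :=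
  ((hE.2.2 p t).mp h).1

theorem exists_deliver_same_frame (hE : E.PGValid) (hp : E.Pending p t)
    (hnd : E.dropTime p ≠ some t) : ∃ ℓ : Fin k, E.deliver t = some (p.1, ℓ) := by
  rw [Ne, hE.2.2] at hnd
  push Not at hnd
  obtain ⟨hal, hsame⟩ := hnd hp
  obtain ⟨q, hq⟩ := Option.ne_none_iff_exists'.mp (hE.2.1 t ⟨p.1, hal, p.2, hp⟩)
  exact ⟨q.2, by rw [hq, ← hsame q hq]⟩

theorem deliver_unique (hE : E.PGValid) (hs : E.deliver s = some p)
    (ht : E.deliver t = some p) : s = t := by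
  have not_redelivered {r u : ℕ} (hr : E.deliver r = some p) (hu : E.deliver u = some p) :
      u ≤ r :=
    not_lt.mp fun hlt => (hE.pending_of_deliver hu).2.2.1 ⟨r, hlt, hr⟩
  exact le_antisymm (not_redelivered ht hs) (not_redelivered hs ht)

/- A packet neither delivered nor dropped stays pending for `d + 1` slots, all of which must
then serve distinct packets of its own frame, which has only `k ≤ d` of them. -/
theorem deliveredBy_or_dropTime_le (hE : E.PGValid) (hkd : k ≤ d) (p : Fin n × Fin k) :
    E.DeliveredBy p (A.a p.1 p.2 + d) ∨ ∃ s ≤ A.a p.1 p.2 + d, E.dropTime p = some s := by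
  by_contra! h
  obtain ⟨hdel, hdrop⟩ := h
  have pending (j : Fin (d + 1)) : E.Pending p (A.a p.1 p.2 + j) := by
    refine ⟨by omega, by omega, ?_, ?_⟩
    · rintro ⟨s, hs, hp⟩
      exact hdel ⟨s, by omega, hp⟩
    · rintro ⟨s, hs, hp⟩
      exact hdrop s (by omega) hp
  choose m hm using fun j : Fin (d + 1) =>
    hE.exists_deliver_same_frame (pending j) (hdrop _ (by omega))
  have m_injective : Function.Injective m := fun i j hij => by
    have := hE.deliver_unique (hm i) (hij ▸ hm j)
    omega
  have := Fin.le_of_injective m m_injective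
  omega

theorem exists_dropTime_of_not_completed (hE : E.PGValid) (hkd : k ≤ d)
    (hf : ¬ E.Completed f) : ∃ ℓ : Fin k, E.dropTime (f, ℓ) = some (E.dropT f) := by
  obtain ⟨ℓ, hℓ⟩ := not_forall.mp hf
  rcases hE.deliveredBy_or_dropTime_le hkd (f, ℓ) with ⟨s, -, hs⟩ | ⟨s, -, hs⟩
  · exact absurd ⟨s, hs⟩ hℓ
  · exact exists_dropTime_eq_dropT hs

theorem alive_dropT (hE : E.PGValid) (hkd : k ≤ d) (f : Fin n) : E.Alive f (E.dropT f) := by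
  refine fun ℓ => ⟨fun ⟨s, hs, hdrop⟩ => (dropT_le hdrop).not_gt hs, fun hexp => ?_⟩
  refine (hE.deliveredBy_or_dropTime_le hkd (f, ℓ)).resolve_right fun ⟨s, hs, hdrop⟩ => ?_
  exact (dropT_le hdrop).not_gt (hs.trans_lt hexp)

theorem hasPending_dropT (hE : E.PGValid) (hkd : k ≤ d) (hf : ¬ E.Completed f) :
    E.HasPending f (E.dropT f) :=
  (hE.exists_dropTime_of_not_completed hkd hf).imp fun _ h => hE.pending_of_dropTime h

theorem ne_of_phiDirectVia (hE : E.PGValid) (hkd : k ≤ d) (h : E.PhiDirectVia f q) :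
    q.1 ≠ f := by
  obtain ⟨ℓ, hℓ⟩ := hE.exists_dropTime_of_not_completed hkd h.1
  rcases ((hE.2.2 _ _).mp hℓ).2 with hdead | ⟨q', hq', hne⟩
  · exact absurd (hE.alive_dropT hkd f) hdead
  · rwa [Option.some.inj (h.2.symm.trans hq')]

theorem exists_deliver_pred_of_pending (hE : E.PGValid) (hp : E.Pending p t)
    (harr : A.a p.1 p.2 < t) : ∃ ℓ : Fin k, E.deliver (t - 1) = some (p.1, ℓ) := by
  have hlt : t - 1 < t := by omega
  exact hE.exists_deliver_same_frame (hp.anti (by omega) hlt.le)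
    fun hdrop => hp.2.2.2 ⟨t - 1, hlt, hdrop⟩

theorem ncard_hasPending_le (hE : E.PGValid) (hburst : A.BurstBound b) (t : ℕ) :
    {f | E.HasPending f t}.ncard ≤ b + 1 := by
  let arriving : Set (Fin n) := Prod.fst '' {p : Fin n × Fin k | A.a p.1 p.2 = t}
  let served : Set (Fin n) := {f | ∃ ℓ : Fin k, E.deliver (t - 1) = some (f, ℓ)}
  have cover : {f | E.HasPending f t} ⊆ arriving ∪ served := by
    rintro f ⟨ℓ, hℓ⟩
    rcases hℓ.1.eq_or_lt with heq | hlt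
    · exact .inl ⟨(f, ℓ), heq, rfl⟩
    · exact .inr (hE.exists_deliver_pred_of_pending hℓ hlt)
  have arriving_le : arriving.ncard ≤ b :=
    (Set.ncard_image_le (Set.toFinite _)).trans (hburst t)
  have served_le : served.ncard ≤ 1 := by
    refine (Set.ncard_le_one served.toFinite).mpr ?_
    rintro f ⟨ℓ, hf⟩ g ⟨m, hg⟩
    exact congrArg Prod.fst (Option.some.inj (hf.symm.trans hg))
  calc {f | E.HasPending f t}.ncard
    _ ≤ (arriving ∪ served).ncard := Set.ncard_le_ncard cover (Set.toFinite _)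
    _ ≤ arriving.ncard + served.ncard := Set.ncard_union_le _ _
    _ ≤ b + 1 := by gcongr

theorem ncard_phiDirectVia_le (hE : E.PGValid) (hkd : k ≤ d) (hburst : A.BurstBound b)
    (q : Fin n × Fin k) : {f | E.PhiDirectVia f q}.ncard ≤ b := by
  rcases Set.eq_empty_or_nonempty {f | E.PhiDirectVia f q} with hempty | ⟨f₀, hf₀⟩
  · simp only [hempty, Set.ncard_empty, zero_le]
  · have subset : {f | E.PhiDirectVia f q} ⊆ {f | E.HasPending f (E.dropT f₀)} :=
      fun f hf => hE.deliver_unique hf.2 hf₀.2 ▸ hE.hasPending_dropT hkd hf.1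
    have ssubset : {f | E.PhiDirectVia f q} ⊂ {f | E.HasPending f (E.dropT f₀)} :=
      (Set.ssubset_iff_of_subset subset).mpr ⟨q.1, ⟨q.2, hE.pending_of_deliver hf₀.2⟩,
        fun hq => hE.ne_of_phiDirectVia hkd hq rfl⟩
    exact Nat.lt_succ_iff.mp
      ((Set.ncard_lt_ncard ssubset).trans_le (hE.ncard_hasPending_le hburst _))

/- If the first packet pending at `t` had index at most `ℓ`, it would have arrived by time `s`
and hence been the one to be delivered then. -/
theorem lt_Iidx_of_deliver (hE : E.PGValid) (hs : E.deliver s = some (f, ℓ)) (hst : s < t)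
    (hp : E.HasPending f t) : ℓ < E.Iidx t f := by
  obtain ⟨m, hm, hmt⟩ := hp.exists_pending_Iidx
  rw [← hm, Fin.val_fin_lt]
  by_contra! hmℓ
  have hms : E.Pending (f, m) s :=
    hmt.anti ((A.mono f hmℓ).trans (hE.pending_of_deliver hs).1) hst.le
  have hℓm : ℓ ≤ m := (hE.Iidx_eq_of_deliver hs).symm.trans_le hms.Iidx_le
  obtain rfl := le_antisymm hmℓ hℓm
  exact hmt.2.2.1 ⟨s, hst, hs⟩

theorem deliver_lt_dropT (hE : E.PGValid) (hkd : k ≤ d) (h : E.PhiDirectVia f q)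
    (hs : E.deliver s = some (f, ℓ)) : s < E.dropT f := by
  obtain ⟨m, hm⟩ := hE.exists_dropTime_of_not_completed hkd h.1
  have hle : s ≤ E.dropT f :=
    not_lt.mp fun hlt => (hE.alive_of_deliver hs m).1 ⟨_, hlt, hm⟩
  refine hle.lt_of_ne ?_
  rintro rfl
  exact hE.ne_of_phiDirectVia hkd h
    (congrArg Prod.fst (Option.some.inj (h.2.symm.trans hs)))

theorem index_lt_of_phiDirectVia (hE : E.PGValid) (hkd : k ≤ d) (h : E.PhiDirectVia g q)
    (hs : E.deliver s = some (g, ℓ)) : ℓ < q.2 :=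
  have hp : E.HasPending g (E.dropT g) := hE.hasPending_dropT hkd h.1
  (hE.lt_Iidx_of_deliver hs (hE.deliver_lt_dropT hkd h hs) hp).trans_le
    (hE.Iidx_le_of_deliver h.2 (hE.alive_dropT hkd g) hp)

theorem direct_or_exists_of_phiMappedVia (hE : E.PGValid) (hkd : k ≤ d)
    (h : E.PhiMappedVia f q) :
    E.PhiDirectVia f q ∨
      ∃ g, E.PhiDirectVia g q ∧ ∃ ℓ < q.2, E.PhiMappedVia f (g, ℓ) := by
  refine h.direct_or_exists.imp_right ?_
  rintro ⟨g, ℓ, ⟨j, hj⟩, hg⟩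
  exact ⟨g, hg, ℓ, hE.index_lt_of_phiDirectVia hkd hg hj.2, j, hj⟩

end PGValid

end AlgExec

/-- In any execution of `ProactiveGreedy` on an arrival sequence with
maximum burst size `b`, for every frame and every packet `q` of it of (0-indexed)
index `i = q.2` (the `(i+1)`-st packet of the frame), the total number of frames mapped
(directly or indirectly) by `φ` to that frame via `q` is at most `b · (1 + b) ^ i`. -/
theorem pg_mapping_load (n k d b : ℕ) (hkd : k ≤ d)
    (A : ArrivalSeq n k d) (hburst : A.BurstBound b)
    (E : AlgExec A) (hE : E.PGValid) :
    ∀ q : Fin n × Fin k,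
      Set.ncard {f : Fin n | E.PhiMappedVia f q} ≤ b * (1 + b) ^ (q.2 : ℕ) :=
  ncard_le_mul_one_add_pow_of_branching
    (D := fun q => {f | E.PhiDirectVia f q}) (M := fun q => {f | E.PhiMappedVia f q})
    (hE.ncard_phiDirectVia_le hkd hburst)
    (fun _ _ hf => hE.direct_or_exists_of_phiMappedVia hkd hf)
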